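/- Let n ≥ 1 and let α, β ∈ (Fin n → ℤ) be nonzero elements such that the greatest common divisor of the coordinates of α equals the greatest common divisor of the coordinates of β. Then there exists a ℤ-linear automorphism f of (Fin n → ℤ) with f α = β. -/

import Mathlib

/-!
Smith normal form for the rank-one submodule `ℤ α` gives a basis of `ℤⁿ` in which `α` is an integer
multiple of a single basis vector, so some automorphism sends `α` to `c e₀`
(`exists_equiv_apply_eq_single`). Automorphisms preserve the gcd of the coordinates
(`gcd_apply_equiv`), hence `c` is determined up to sign by that gcd. Normalising `α` and `β` this
way and correcting the sign by `-1` yields the required automorphism.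
-/

/-- A linear map can only enlarge the gcd of the coordinates, since the coordinates of the image
are integer combinations of the original ones. -/
lemma gcd_dvd_gcd_apply {n : ℕ} (f : (Fin n → ℤ) →ₗ[ℤ] (Fin n → ℤ)) (v : Fin n → ℤ) :
    Finset.univ.gcd v ∣ Finset.univ.gcd (f v) := by
  refine Finset.dvd_gcd fun i _ => ?_
  rw [LinearMap.pi_apply_eq_sum_univ f v, Finset.sum_apply]
  refine Finset.dvd_sum fun j _ => ?_
  rw [Pi.smul_apply, smul_eq_mul]
  exact (Finset.gcd_dvd (Finset.mem_univ j)).mul_right _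

lemma gcd_apply_equiv {n : ℕ} (e : (Fin n → ℤ) ≃ₗ[ℤ] (Fin n → ℤ)) (v : Fin n → ℤ) :
    Finset.univ.gcd (e v) = Finset.univ.gcd v := by
  refine dvd_antisymm_of_normalize_eq Finset.normalize_gcd Finset.normalize_gcd ?_ ?_
  · simpa using gcd_dvd_gcd_apply e.symm.toLinearMap (e v)
  · exact gcd_dvd_gcd_apply e.toLinearMap v

lemma gcd_single {n : ℕ} (i : Fin n) (c : ℤ) :
    Finset.univ.gcd (Pi.single i c : Fin n → ℤ) = normalize c := by
  refine dvd_antisymm_of_normalize_eq Finset.normalize_gcd (normalize_idem c) ?_ ?_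
  · rw [dvd_normalize_iff]
    simpa using Finset.gcd_dvd (f := (Pi.single i c : Fin n → ℤ)) (Finset.mem_univ i)
  · rw [normalize_dvd_iff]
    refine Finset.dvd_gcd fun j _ => ?_
    by_cases h : j = i
    · subst h; simp
    · simp [h]

lemma exists_equiv_apply_eq_single {n : ℕ} (i₀ : Fin n) (v : Fin n → ℤ) (hv : v ≠ 0) :
    ∃ (e : (Fin n → ℤ) ≃ₗ[ℤ] (Fin n → ℤ)) (c : ℤ), e v = Pi.single i₀ c := by
  obtain ⟨m, bM, bN, f, a, snf⟩ :=
    (Submodule.span ℤ {v}).smithNormalForm (Pi.basisFun ℤ (Fin n))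
  have hm : m = 1 := by
    have h1 := Module.finrank_eq_card_basis bN
    rw [← (LinearEquiv.toSpanNonzeroSingleton ℤ _ v hv).finrank_eq, Module.finrank_self,
      Fintype.card_fin] at h1
    exact h1.symm
  subst hm
  let w : Submodule.span ℤ {v} := ⟨v, Submodule.mem_span_singleton_self v⟩
  have hw : v = (bN.repr w 0 * a 0) • bM (f 0) := by
    have h := congrArg Subtype.val (bN.sum_repr w)
    rw [Fin.sum_univ_one, Submodule.coe_smul, snf, smul_smul] at h
    exact h.symm
  refine ⟨(bM.reindex (Equiv.swap (f 0) i₀)).equivFun, bN.repr w 0 * a 0, ?_⟩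
  have hb : bM (f 0) = bM.reindex (Equiv.swap (f 0) i₀) i₀ := by simp
  conv_lhs => rw [hw, hb, map_smul]
  ext j
  rw [Pi.smul_apply, Module.Basis.equivFun_self]
  by_cases h : j = i₀
  · subst h; simp
  · simp [h, Ne.symm h]

/-- Two nonzero elements of `Fin n → ℤ` (`n ≥ 1`) whose coordinates have equal
greatest common divisors are related by a `ℤ`-linear automorphism. -/
theorem exists_linear_automorphism_of_gcd_eq
    (n : ℕ) (hn : 1 ≤ n) (α β : Fin n → ℤ) (hα : α ≠ 0) (hβ : β ≠ 0)
    (hgcd : Finset.univ.gcd α = Finset.univ.gcd β) :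
    ∃ f : (Fin n → ℤ) ≃ₗ[ℤ] (Fin n → ℤ), f α = β := by
  obtain ⟨e₁, c₁, h₁⟩ := exists_equiv_apply_eq_single ⟨0, hn⟩ α hα
  obtain ⟨e₂, c₂, h₂⟩ := exists_equiv_apply_eq_single ⟨0, hn⟩ β hβ
  rw [← gcd_apply_equiv e₁ α, ← gcd_apply_equiv e₂ β, h₁, h₂, gcd_single, gcd_single,
    ← Int.abs_eq_normalize, ← Int.abs_eq_normalize, abs_eq_abs] at hgcd
  rcases hgcd with h | h
  · refine ⟨e₁.trans e₂.symm, ?_⟩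
    rw [LinearEquiv.trans_apply, h₁, h, ← h₂, LinearEquiv.symm_apply_apply]
  · refine ⟨(e₁.trans e₂.symm).trans (LinearEquiv.neg ℤ), ?_⟩
    rw [LinearEquiv.trans_apply, LinearEquiv.trans_apply, h₁, h, Pi.single_neg, ← h₂, map_neg,
      LinearEquiv.symm_apply_apply, LinearEquiv.neg_apply, neg_neg]
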